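/- Suppose the horizon N satisfies 𝒞_N(s) ≤ c for all 0 ≤ s ≤ N, and let 0 ≤ t < N be such that 𝒞_t(s) > c·(N + 1 − t) for every 0 ≤ s ≤ t. Then V_t(s) < 𝒞_t(s) for every 0 ≤ s ≤ t; that is, the optimal stopping rule does not stop at time t for any value of the success count. -/

import Mathlib

open MeasureTheory Set


/-- `m_t(s) = ∫_0^1 θ^s (1-θ)^(t-s) π(θ) dθ`. -/
noncomputable def margLik (π : ℝ → ℝ) (t s : ℕ) : ℝ :=
  ∫ θ in Ioc (0:ℝ) 1, θ ^ s * (1 - θ) ^ (t - s) * π θ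

/-- Posterior density `π_t(θ|s)`. -/
noncomputable def postDens (π : ℝ → ℝ) (t s : ℕ) (θ : ℝ) : ℝ :=
  θ ^ s * (1 - θ) ^ (t - s) * π θ / margLik π t s

/-- Posterior coverage of the interval `[a-h, a+h]` cropped to `[0,1]`. -/
noncomputable def covFn (h : ℝ) (π : ℝ → ℝ) (t s : ℕ) (a : ℝ) : ℝ :=
  ∫ θ in Ioc (max (a - h) 0) (min (a + h) 1), postDens π t s θ

/-- Optimal conditional complementary coverage probability `𝒞_t(s)`. -/
noncomputable def Copt (h : ℝ) (π : ℝ → ℝ) (t s : ℕ) : ℝ :=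
  1 - sSup (covFn h π t s '' Icc 0 1)

/-- Predictive probability `g_{t+1}(s) = m_{t+1}(s+1)/m_t(s)`. -/
noncomputable def gpred (π : ℝ → ℝ) (t s : ℕ) : ℝ :=
  margLik π (t + 1) (s + 1) / margLik π t s

/-- Auxiliary backward recursion: `Vaux k s = V_{N-k}(s)`. -/
noncomputable def Vaux (h : ℝ) (π : ℝ → ℝ) (c : ℝ) (N : ℕ) : ℕ → ℕ → ℝ
  | 0, s => Copt h π N s
  | k + 1, s =>
      min (Copt h π (N - (k + 1)) s)
        (c + gpred π (N - (k + 1)) s * Vaux h π c N k (s + 1)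
           + (1 - gpred π (N - (k + 1)) s) * Vaux h π c N k s)

/-- Optimal residual cost `V_t(s)` for horizon `N` and sampling cost `c`. -/
noncomputable def Vopt (h : ℝ) (π : ℝ → ℝ) (c : ℝ) (N t s : ℕ) : ℝ :=
  Vaux h π c N (N - t) s

/-!
Sampling up to the horizon `N` whatever is observed is one of the strategies over which `V_t(s)` is
a minimum. It costs `c * (N - t)` for the observations and then at most `c` for the terminal
decision, so `V_t(s) ≤ c * (N + 1 - t)`, which is below the cost of stopping at time `t`.
-/

/-- The Bellman operator of an optimal stopping problem: in state `x` one either stops at cost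
`C x`, or pays `c` and goes on at the expected cost `E f x`, where `f` is the cost of the next state
and `E` the one-step expectation operator. Its `k`-th iterate at `C` is the optimal cost with at
most `k` steps to go. -/
def bellman {S : Type*} (C : S → ℝ) (c : ℝ) (E : (S → ℝ) → S → ℝ) (f : S → ℝ) (x : S) : ℝ :=
  min (C x) (c + E f x)

/-- The one-step expectation operator of a success count: from `(t, s)`, where `t` is the time and
`s` the number of successes, it moves to `(t + 1, s + 1)` with probability `g t s` and to
`(t + 1, s)` otherwise. -/
def successCountStep (g : ℕ → ℕ → ℝ) (f : ℕ × ℕ → ℝ) : ℕ × ℕ → ℝ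
  | (t, s) => g t s * f (t + 1, s + 1) + (1 - g t s) * f (t + 1, s)

/-- `R k` plays the part of the set of states exactly `k` steps away from the horizon. -/
theorem iterate_bellman_le {S : Type*} {C : S → ℝ} {b c : ℝ} {E : (S → ℝ) → S → ℝ} {R : ℕ → Set S}
    (hE : ∀ k f a, (∀ x ∈ R k, f x ≤ a) → ∀ x ∈ R (k + 1), E f x ≤ a)
    (hC : ∀ x ∈ R 0, C x ≤ b) (k : ℕ) : ∀ x ∈ R k, (bellman C c E)^[k] C x ≤ b + c * k := by
  induction k with
  | zero => simpa using hC
  | succ k ih =>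
    intro x hx
    rw [Function.iterate_succ_apply']
    calc bellman C c E ((bellman C c E)^[k] C) x
        ≤ c + E ((bellman C c E)^[k] C) x := min_le_right _ _
      _ ≤ c + (b + c * k) := by gcongr; exact hE k _ _ ih x hx
      _ = b + c * (k + 1 : ℕ) := by push_cast; ring

theorem successCountStep_le {g : ℕ → ℕ → ℝ} {f : ℕ × ℕ → ℝ} {a : ℝ} {t s : ℕ}
    (hg : g t s ∈ Icc 0 1) (hsucc : f (t + 1, s + 1) ≤ a) (hfail : f (t + 1, s) ≤ a) :
    successCountStep g f (t, s) ≤ a :=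
  convex_Iic a hsucc hfail hg.1 (sub_nonneg.2 hg.2) (add_sub_cancel _ _)

theorem Vaux_eq_iterate_bellman (h : ℝ) (π : ℝ → ℝ) (c : ℝ) {N k : ℕ} (hk : k ≤ N) (s : ℕ) :
    Vaux h π c N k s =
      (bellman (Copt h π).uncurry c (successCountStep (gpred π)))^[k] (Copt h π).uncurry
        (N - k, s) := by
  induction k generalizing s with
  | zero => rfl
  | succ k ih =>
    have time_succ : N - (k + 1) + 1 = N - k := by omega
    rw [Function.iterate_succ_apply', Vaux, ih (by omega), ih (by omega)]
    simp only [bellman, successCountStep, Function.uncurry_apply_pair, time_succ, add_assoc]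

theorem Vopt_eq_iterate_bellman (h : ℝ) (π : ℝ → ℝ) (c : ℝ) {N t : ℕ} (ht : t ≤ N) (s : ℕ) :
    Vopt h π c N t s =
      (bellman (Copt h π).uncurry c (successCountStep (gpred π)))^[N - t] (Copt h π).uncurry
        (t, s) := by
  rw [Vopt, Vaux_eq_iterate_bellman h π c (Nat.sub_le N t), Nat.sub_sub_self ht]

theorem no_stopping_before_general {C g : ℕ → ℕ → ℝ} {b c : ℝ} {N t s : ℕ}
    (hg : ∀ t < N, ∀ s ≤ t, g t s ∈ Icc 0 1) (hN : ∀ s ≤ N, C N s ≤ b)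
    (ht : t ≤ N) (hs : s ≤ t) (hC : b + c * (N - t) < C t s) :
    (bellman C.uncurry c (successCountStep g))^[N - t] C.uncurry (t, s) < C t s := by
  let R (k : ℕ) : Set (ℕ × ℕ) := {x | x.1 + k = N ∧ x.2 ≤ x.1}
  have step_le (k f a) (hf : ∀ x ∈ R k, f x ≤ a) : ∀ x ∈ R (k + 1), successCountStep g f x ≤ a := by
    rintro ⟨t, s⟩ ⟨(htk : t + (k + 1) = N), (hst : s ≤ t)⟩
    have htk' : t + 1 + k = N := by omega
    exact successCountStep_le (hg t (by omega) s hst)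
      (hf _ ⟨htk', Nat.succ_le_succ hst⟩) (hf _ ⟨htk', Nat.le_succ_of_le hst⟩)
  have terminal_le : ∀ x ∈ R 0, C.uncurry x ≤ b := by
    rintro ⟨_, s⟩ ⟨rfl, hsN⟩
    exact hN s hsN
  calc (bellman C.uncurry c (successCountStep g))^[N - t] C.uncurry (t, s)
      ≤ b + c * (N - t : ℕ) :=
        iterate_bellman_le step_le terminal_le _ _ ⟨Nat.add_sub_cancel' ht, hs⟩
    _ < C t s := by rwa [Nat.cast_sub ht]

/-- if `𝒞_N(s) ≤ c` for all `s` and `𝒞_t(s) > c (N + 1 - t)`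
for every `s ≤ t`, then the optimal rule does not stop at time `t`. -/
theorem no_stopping_before (h : ℝ) (hh : 0 < h ∧ h < 1 / 2)
    (π : ℝ → ℝ) (hπ0 : ∀ θ, 0 ≤ π θ) (hπ1 : (∫ θ in (0:ℝ)..1, π θ) = 1)
    (hm : ∀ t s : ℕ, 0 < margLik π t s)
    (hg : ∀ t s : ℕ, 0 ≤ gpred π t s ∧ gpred π t s ≤ 1)
    (c : ℝ) (hc : 0 < c) (N : ℕ)
    (hN : ∀ s : ℕ, s ≤ N → Copt h π N s ≤ c)
    (t : ℕ) (ht : t < N)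
    (hCt : ∀ s : ℕ, s ≤ t → c * ((N : ℝ) + 1 - t) < Copt h π t s) :
    ∀ s : ℕ, s ≤ t → Vopt h π c N t s < Copt h π t s := by
  intro s hs
  rw [Vopt_eq_iterate_bellman h π c ht.le]
  exact no_stopping_before_general (fun t _ s _ ↦ hg t s) hN ht.le hs (by linarith [hCt s hs])
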